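/- arXiv:2208.08987 — 2 statements merged into one kernel-verified Lean document; each statement's English description precedes it below -/
import Mathlib

section
/- Let S₀ := {(β₁, β₂) ∈ ℚ × ℚ : 3β₁ ∈ ℤ, β₂ ∈ ℤ, 3β₁ + β₂ ≥ 0, β₂ ≥ 0}. Then the set of β = (β₁, β₂) ∈ S₀ such that 2β₁ + β₂ ≤ 1 and 4β₁ + β₂ is a negative integer is exactly the singleton {(−1, 3)}. -/
/-- Among classes in `S₀` of degree `2β₁ + β₂ ≤ 1`, the unique one whose
pairing `4β₁ + β₂` with the weight `(4,1)` is a negative integer is `(-1, 3)`. -/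
theorem unique_non_Inonnegative_class :
    {β : ℚ × ℚ | ((∃ a : ℤ, 3 * β.1 = (a : ℚ)) ∧ (∃ b : ℤ, β.2 = (b : ℚ)) ∧
        0 ≤ 3 * β.1 + β.2 ∧ 0 ≤ β.2) ∧ 2 * β.1 + β.2 ≤ 1 ∧
        ∃ k : ℤ, k < 0 ∧ 4 * β.1 + β.2 = (k : ℚ)} =
      {((-1 : ℚ), (3 : ℚ))} := by
  ext ⟨x, y⟩
  simp only [Set.mem_setOf_eq, Set.mem_singleton_iff, Prod.mk.injEq]
  constructor
  · rintro ⟨⟨⟨a, ha⟩, ⟨b, hb⟩, h1, h2⟩, h3, k, hk, h4⟩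
    have e1 : (0 : ℚ) ≤ a + b := by linarith
    have e2 : (2 * a + 3 * b : ℚ) ≤ 3 := by linarith
    have e3 : (4 * a + 3 * b : ℚ) = 3 * k := by linarith
    have e4 : (0 : ℚ) ≤ b := by linarith
    norm_cast at e1 e2 e3 e4
    have ea : a = -3 := by omega
    have eb : b = 3 := by omega
    subst ea eb
    push_cast at ha hb
    constructor <;> linarith
  · rintro ⟨rfl, rfl⟩
    exact ⟨⟨⟨-3, by norm_num⟩, ⟨3, by norm_num⟩, by norm_num, by norm_num⟩, by norm_num,
      -1, by norm_num, by norm_num⟩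
end

section
/- Let s = x₅(x₂⁴ + x₃⁴) + x₁x₄ ∈ ℂ[x₁, …, x₅]. If a = (a₁, …, a₅) ∈ ℂ⁵ is a point at which all five partial derivatives ∂s/∂xᵢ vanish, then either a₁ = a₂ = a₃ = a₄ = 0, or a₄ = a₅ = 0; moreover s(a) = 0 at any such point. -/
open MvPolynomial

/-- Every point of `ℂ⁵` at which all five partial derivatives of
`s = x₅(x₂⁴ + x₃⁴) + x₁x₄` vanish satisfies `x₁ = x₂ = x₃ = x₄ = 0` or
`x₄ = x₅ = 0`, and `s` itself vanishes there. (Variables are indexed `0,…,4` for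
`x₁,…,x₅`.) -/
theorem singular_locus_of_section (a : Fin 5 → ℂ)
    (h : ∀ i : Fin 5,
      eval a (pderiv i ((X 4 : MvPolynomial (Fin 5) ℂ) * (X 1 ^ 4 + X 2 ^ 4)
        + X 0 * X 3)) = 0) :
    ((a 0 = 0 ∧ a 1 = 0 ∧ a 2 = 0 ∧ a 3 = 0) ∨ (a 3 = 0 ∧ a 4 = 0)) ∧
      eval a ((X 4 : MvPolynomial (Fin 5) ℂ) * (X 1 ^ 4 + X 2 ^ 4) + X 0 * X 3) = 0 := by
  have h0 := h 0
  have h1 := h 1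
  have h2 := h 2
  have h3 := h 3
  have h4 := h 4
  simp [pderiv_X, Pi.single_apply, Derivation.leibniz_pow] at h0 h1 h2 h3 h4
  refine ⟨?_, by simp [h0, h4]⟩
  by_cases h5 : a 4 = 0
  · exact Or.inr ⟨h0, h5⟩
  · simp [h5] at h1 h2
    exact Or.inl ⟨h3, h1, h2, h0⟩
end
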